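/- Let s, y ∈ ℝⁿ with sᵀy ≠ 0, let H be a symmetric n×n real matrix, and for β > 0 (sufficiently large that sᵀy + 1/β ≠ 0 and sᵀy + 2/β ≠ 0) let H₊(β) denote the SP-BFGS update of H with data (s, y, β). Then as β → +∞, H₊(β) converges (entrywise) to the BFGS update (I − ρ s yᵀ) H (I − ρ y sᵀ) + ρ s sᵀ, where ρ = 1/(sᵀy). -/

import Mathlib

open Matrix Filter

/-- The SP-BFGS update of `H` with data `(s, y, β)`:
`H₊(β) = (I − ω s yᵀ) H (I − ω y sᵀ) + ω[γ/ω + (γ − ω)(yᵀ H y)] s sᵀ`,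
where `γ = 1/(sᵀy + 1/β)` and `ω = 1/(sᵀy + 2/β)`. -/
noncomputable def spbfgsUpdate {n : ℕ} (H : Matrix (Fin n) (Fin n) ℝ) (s y : Fin n → ℝ)
    (β : ℝ) : Matrix (Fin n) (Fin n) ℝ :=
  (1 - (1 / (s ⬝ᵥ y + 2 / β)) • vecMulVec s y) * H *
      (1 - (1 / (s ⬝ᵥ y + 2 / β)) • vecMulVec y s) +
    ((1 / (s ⬝ᵥ y + 2 / β)) *
        ((1 / (s ⬝ᵥ y + 1 / β)) / (1 / (s ⬝ᵥ y + 2 / β)) +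
          ((1 / (s ⬝ᵥ y + 1 / β)) - (1 / (s ⬝ᵥ y + 2 / β))) * (y ⬝ᵥ H *ᵥ y))) •
      vecMulVec s s

section OfWeights

variable {ι K : Type*} [Fintype ι] [DecidableEq ι] [Field K]

/-- The SP-BFGS update with the weights `γ` and `ω` as independent parameters; setting
`γ = 1/(sᵀy + 1/β)` and `ω = 1/(sᵀy + 2/β)` gives the SP-BFGS update. The quotient `γ / ω` is kept
as in the paper, so the formula is meaningful only for `ω ≠ 0`. -/
def spbfgsUpdateOfWeights (H : Matrix ι ι K) (s y : ι → K) (γ ω : K) : Matrix ι ι K :=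
  (1 - ω • vecMulVec s y) * H * (1 - ω • vecMulVec y s) +
    (ω * (γ / ω + (γ - ω) * (y ⬝ᵥ H *ᵥ y))) • vecMulVec s s

theorem spbfgsUpdateOfWeights_self (H : Matrix ι ι K) (s y : ι → K) {ρ : K} (hρ : ρ ≠ 0) :
    spbfgsUpdateOfWeights H s y ρ ρ =
      (1 - ρ • vecMulVec s y) * H * (1 - ρ • vecMulVec y s) + ρ • vecMulVec s s := by
  simp [spbfgsUpdateOfWeights, hρ]

theorem tendsto_spbfgsUpdateOfWeights [TopologicalSpace K] [IsTopologicalRing K]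
    [ContinuousInv₀ K] {α : Type*} {l : Filter α} {f g : α → K} {γ ω : K}
    (H : Matrix ι ι K) (s y : ι → K) (hf : Tendsto f l (nhds γ)) (hg : Tendsto g l (nhds ω))
    (hω : ω ≠ 0) :
    Tendsto (fun x => spbfgsUpdateOfWeights H s y (f x) (g x)) l
      (nhds (spbfgsUpdateOfWeights H s y γ ω)) := by
  have hleft := (hg.smul_const (vecMulVec s y)).const_sub 1
  have hright := (hg.smul_const (vecMulVec y s)).const_sub 1
  have hcoeff := hg.mul ((hf.div hg hω).add ((hf.sub hg).mul_const (y ⬝ᵥ H *ᵥ y)))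
  exact ((hleft.mul_const H).mul hright).add (hcoeff.smul_const (vecMulVec s s))

end OfWeights

section LinearOrderedField

variable {K : Type*} [Field K] [LinearOrder K] [IsStrictOrderedRing K] [TopologicalSpace K]
  [OrderTopology K]

theorem tendsto_one_div_add_div_atTop {a : K} (ha : a ≠ 0) (c : K) :
    Tendsto (fun β : K => 1 / (a + c / β)) atTop (nhds (1 / a)) := by
  have hden : Tendsto (fun β : K => a + c / β) atTop (nhds a) := by
    simpa only [id_eq, add_zero] using (tendsto_id.const_div_atTop c).const_add a
  exact tendsto_const_nhds.div hden ha

theorem spbfgs_tendsto_bfgs_atTop_general {ι : Type*} [Fintype ι] [DecidableEq ι]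
    (s y : ι → K) (hsy : s ⬝ᵥ y ≠ 0) (H : Matrix ι ι K) :
    Tendsto
      (fun β : K => spbfgsUpdateOfWeights H s y (1 / (s ⬝ᵥ y + 1 / β)) (1 / (s ⬝ᵥ y + 2 / β)))
      atTop
      (nhds
        ((1 - (1 / (s ⬝ᵥ y)) • vecMulVec s y) * H * (1 - (1 / (s ⬝ᵥ y)) • vecMulVec y s) +
          (1 / (s ⬝ᵥ y)) • vecMulVec s s)) := by
  have hγ := tendsto_one_div_add_div_atTop hsy 1
  have hω := tendsto_one_div_add_div_atTop hsy 2
  have hρ : 1 / (s ⬝ᵥ y) ≠ 0 := one_div_ne_zero hsy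
  rw [← spbfgsUpdateOfWeights_self H s y hρ]
  exact tendsto_spbfgsUpdateOfWeights H s y hγ hω hρ

end LinearOrderedField

/-- **As `β → +∞`, the SP-BFGS update converges (entrywise) to the BFGS update**
`(I − ρ s yᵀ) H (I − ρ y sᵀ) + ρ s sᵀ` with `ρ = 1/(sᵀy)`. -/
theorem spbfgs_tendsto_bfgs_atTop
    {n : ℕ} (s y : Fin n → ℝ) (hsy : s ⬝ᵥ y ≠ 0)
    (H : Matrix (Fin n) (Fin n) ℝ) (hH : Hᵀ = H) :
    Tendsto (fun β : ℝ => spbfgsUpdate H s y β) atTop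
      (nhds
        ((1 - (1 / (s ⬝ᵥ y)) • vecMulVec s y) * H * (1 - (1 / (s ⬝ᵥ y)) • vecMulVec y s) +
          (1 / (s ⬝ᵥ y)) • vecMulVec s s)) :=
  spbfgs_tendsto_bfgs_atTop_general s y hsy H
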